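/- arXiv:1703.03237 — 5 statements merged into one kernel-verified Lean document; each statement's English description precedes it below -/
import Mathlib

section
/- Let M be an N×N row-stochastic real matrix (all entries nonnegative and each row sums to 1), let Φ = diag(φ₁,…,φ_N) be a diagonal matrix with 0 ≤ φᵢ < 1 for every i, and let v ∈ ℝ^N be a vector with nonnegative entries summing to 1. Then the matrix I − MᵀΦ is invertible, and ⟨𝟙, (I − Φ)(I − MᵀΦ)⁻¹ v⟩ = 1, where 𝟙 is the all-ones vector. (This is the normalization ⟨Σ|G(k=0,s)⟩ = 1/s of the propagator of the compound process with internal states.) -/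
open Matrix BigOperators

/-!
The `j`-th column of `Mᵀ Φ` has `ℓ¹` norm at most `‖φ j‖ < 1`, so `1 - Mᵀ Φ` is strictly diagonally
dominant by columns, hence invertible. Since the rows of `M` sum to one, `𝟙ᵀ Mᵀ = 𝟙ᵀ`, whence
`𝟙ᵀ (1 - Φ) = 𝟙ᵀ (1 - Mᵀ Φ)` and the inverse cancels.
-/

theorem one_vecMul_eq_one_of_sum_col_eq_one {m n R : Type*} [Fintype m] [NonAssocSemiring R]
    {C : Matrix m n R} (hC : ∀ j, ∑ i, C i j = 1) : 1 ᵥ* C = 1 :=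
  funext fun j => (one_dotProduct _).trans (hC j)

section FixedVector

variable {n R : Type*} [Fintype n] [DecidableEq n]

theorem vecMul_one_sub_mul_of_vecMul_eq_self [Ring R] {w : n → R} {C : Matrix n n R}
    (hw : w ᵥ* C = w) (D : Matrix n n R) : w ᵥ* (1 - C * D) = w ᵥ* (1 - D) := by
  rw [vecMul_sub, vecMul_sub, ← vecMul_vecMul, hw]

theorem dotProduct_one_sub_mul_inv_mulVec [CommRing R] {w : n → R} {C D : Matrix n n R}
    (hw : w ᵥ* C = w) (hCD : IsUnit (1 - C * D)) (v : n → R) :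
    w ⬝ᵥ (((1 - D) * (1 - C * D)⁻¹) *ᵥ v) = w ⬝ᵥ v :=
  calc w ⬝ᵥ (((1 - D) * (1 - C * D)⁻¹) *ᵥ v)
      = (w ᵥ* (1 - D) ᵥ* (1 - C * D)⁻¹) ⬝ᵥ v := by rw [dotProduct_mulVec, vecMul_vecMul]
    _ = (w ᵥ* (1 - C * D) ᵥ* (1 - C * D)⁻¹) ⬝ᵥ v := by
      rw [vecMul_one_sub_mul_of_vecMul_eq_self hw]
    _ = w ⬝ᵥ v := by
      rw [vecMul_vecMul, mul_nonsing_inv _ ((isUnit_iff_isUnit_det _).1 hCD), vecMul_one]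

end FixedVector

section ColumnNorm

theorem sum_norm_col_mul_diagonal {m n R : Type*} [Fintype m] [Fintype n] [DecidableEq n]
    [SeminormedRing R] [NormMulClass R] (A : Matrix m n R) (d : n → R) (j : n) :
    ∑ i, ‖(A * diagonal d) i j‖ = (∑ i, ‖A i j‖) * ‖d j‖ := by
  simp only [mul_diagonal, norm_mul, Finset.sum_mul]

variable {n K : Type*} [Fintype n] [DecidableEq n] [NormedField K]

theorem isUnit_one_sub_of_sum_norm_col_lt_one {A : Matrix n n K}
    (hA : ∀ j, ∑ i, ‖A i j‖ < 1) : IsUnit (1 - A) := by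
  rw [isUnit_iff_isUnit_det, isUnit_iff_ne_zero]
  refine det_ne_zero_of_sum_col_lt_diag fun j => ?_
  have off_diag : ∑ i ∈ Finset.univ.erase j, ‖(1 - A) i j‖ = ∑ i ∈ Finset.univ.erase j, ‖A i j‖ :=
    Finset.sum_congr rfl fun i hi => by
      rw [Matrix.sub_apply, one_apply_ne (Finset.ne_of_mem_erase hi), zero_sub, norm_neg]
  have diag : 1 - ‖A j j‖ ≤ ‖(1 - A) j j‖ := by
    simpa only [Matrix.sub_apply, one_apply_eq, norm_one] using norm_sub_norm_le 1 (A j j)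
  have split := Finset.add_sum_erase Finset.univ (fun i => ‖A i j‖) (Finset.mem_univ j)
  linarith [hA j]

theorem isUnit_one_sub_transpose_mul_diagonal {M : Matrix n n K} {φ : n → K}
    (hM : ∀ i, ∑ j, ‖M i j‖ ≤ 1) (hφ : ∀ i, ‖φ i‖ < 1) : IsUnit (1 - Mᵀ * diagonal φ) :=
  isUnit_one_sub_of_sum_norm_col_lt_one fun j =>
    calc ∑ i, ‖(Mᵀ * diagonal φ) i j‖
        = (∑ i, ‖M j i‖) * ‖φ j‖ := sum_norm_col_mul_diagonal Mᵀ φ j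
      _ ≤ ‖φ j‖ := mul_le_of_le_one_left (norm_nonneg _) (hM j)
      _ < 1 := hφ j

theorem stmt0_general {M : Matrix n n K} {φ : n → K} (hM_norm : ∀ i, ∑ j, ‖M i j‖ ≤ 1)
    (hM_sum : ∀ i, ∑ j, M i j = 1) (hφ : ∀ i, ‖φ i‖ < 1) (v : n → K) :
    IsUnit (1 - Mᵀ * diagonal φ) ∧
      1 ⬝ᵥ (((1 - diagonal φ) * (1 - Mᵀ * diagonal φ)⁻¹) *ᵥ v) = ∑ i, v i := by
  have hU := isUnit_one_sub_transpose_mul_diagonal hM_norm hφ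
  have h_fixed : 1 ᵥ* Mᵀ = 1 := one_vecMul_eq_one_of_sum_col_eq_one hM_sum
  exact ⟨hU, (dotProduct_one_sub_mul_inv_mulVec h_fixed hU v).trans (one_dotProduct v)⟩

end ColumnNorm

/-- For a row-stochastic matrix `M`, a diagonal matrix `Φ = diagonal φ` with entries in `[0,1)`,
and a probability vector `v`, the matrix `I - Mᵀ Φ` is invertible and
`⟨𝟙, (I - Φ)(I - Mᵀ Φ)⁻¹ v⟩ = 1`. -/
theorem stmt0 (N : ℕ) (M : Matrix (Fin N) (Fin N) ℝ) (φ : Fin N → ℝ) (v : Fin N → ℝ)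
    (hM0 : ∀ i j, 0 ≤ M i j) (hM1 : ∀ i, ∑ j, M i j = 1)
    (hφ0 : ∀ i, 0 ≤ φ i) (hφ1 : ∀ i, φ i < 1)
    (hv0 : ∀ i, 0 ≤ v i) (hv1 : ∑ i, v i = 1) :
    IsUnit (1 - Mᵀ * Matrix.diagonal φ) ∧
      (fun _ => (1 : ℝ)) ⬝ᵥ (((1 - Matrix.diagonal φ) * (1 - Mᵀ * Matrix.diagonal φ)⁻¹) *ᵥ v)
        = 1 := by
  exact (stmt0_general (fun i => by simp [abs_of_nonneg, hM0, hM1]) hM1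
    (fun i => by simpa [abs_of_nonneg, hφ0] using hφ1 i) v).imp_right (·.trans hv1)
end

section
/- Every N×N row-stochastic real matrix M admits a stationary distribution: there exists a vector v ∈ ℝ^N with vᵢ ≥ 0 for all i, ∑ᵢ vᵢ = 1, and Mᵀ v = v. -/
open Matrix BigOperators

/-!
The all-ones vector is a right eigenvector of a row-stochastic matrix `M` for the eigenvalue `1`,
so `M - 1` is singular and `M` has a nonzero left fixed vector `w`. Then `|w| ≤ |w| ᵥ* M`
entrywise by the triangle inequality; both sides have the same sum because the rows of `M` sum
to `1`, so `|w|` is itself a left fixed vector, and it only remains to normalize it.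
-/

theorem exists_vecMul_eq_self_iff_exists_mulVec_eq_self {n R : Type*} [Fintype n] [CommRing R]
    [IsDomain R] {M : Matrix n n R} :
    (∃ v ≠ 0, v ᵥ* M = v) ↔ ∃ v ≠ 0, M *ᵥ v = v := by
  classical
  have left_kernel_iff_right_kernel : (∃ v ≠ 0, v ᵥ* (M - 1) = 0) ↔ ∃ v ≠ 0, (M - 1) *ᵥ v = 0 :=
    exists_vecMul_eq_zero_iff.trans exists_mulVec_eq_zero_iff.symm
  simpa only [vecMul_sub, vecMul_one, sub_mulVec, one_mulVec, sub_eq_zero]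
    using left_kernel_iff_right_kernel

theorem abs_vecMul_le_vecMul_abs {m n R : Type*} [Fintype m] [Ring R] [LinearOrder R]
    [IsOrderedRing R] {M : Matrix m n R} (hM : ∀ i j, 0 ≤ M i j) (w : m → R) :
    |w ᵥ* M| ≤ |w| ᵥ* M := fun j ↦
  calc |∑ i, w i * M i j| ≤ ∑ i, |w i * M i j| := Finset.abs_sum_le_sum_abs _ _
    _ = ∑ i, |w i| * M i j := by simp only [abs_mul, abs_of_nonneg (hM _ _)]

section UnitRowSums

variable {n R : Type*} [Fintype n] [Semiring R] {M : Matrix n n R}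

theorem sum_vecMul_of_mulVec_one_eq_one (hM : M *ᵥ 1 = 1) (x : n → R) :
    ∑ j, (x ᵥ* M) j = ∑ i, x i := by
  rw [← dotProduct_one, ← dotProduct_mulVec, hM, dotProduct_one]

theorem vecMul_eq_self_of_le_vecMul [PartialOrder R] [IsOrderedCancelAddMonoid R]
    (hM : M *ᵥ 1 = 1) {x : n → R} (hx : x ≤ x ᵥ* M) : x ᵥ* M = x :=
  .symm <| hx.eq_of_not_lt fun hlt ↦
    (Fintype.sum_strictMono hlt).ne' (sum_vecMul_of_mulVec_one_eq_one hM x)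

end UnitRowSums

theorem vecMul_abs_eq_abs_of_vecMul_eq_self {n R : Type*} [Fintype n] [DecidableEq n] [Ring R]
    [LinearOrder R] [IsOrderedRing R] {M : Matrix n n R} (hM : M ∈ rowStochastic R n) {w : n → R}
    (hw : w ᵥ* M = w) : |w| ᵥ* M = |w| :=
  vecMul_eq_self_of_le_vecMul (one_vecMul_of_mem_rowStochastic hM) <|
    calc |w| = |w ᵥ* M| := by rw [hw]
      _ ≤ |w| ᵥ* M := abs_vecMul_le_vecMul_abs hM.1 w

section LinearOrderedField

variable {n 𝕜 : Type*} [Fintype n] [Field 𝕜] [LinearOrder 𝕜] [IsStrictOrderedRing 𝕜]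

theorem inv_sum_smul_mem_stdSimplex {x : n → 𝕜} (hx : 0 < x) :
    (∑ i, x i)⁻¹ • x ∈ stdSimplex 𝕜 n := by
  have sum_pos : 0 < ∑ i, x i := Fintype.sum_pos hx
  refine ⟨fun i ↦ mul_nonneg (inv_nonneg.2 sum_pos.le) (hx.le i), ?_⟩
  simp only [Pi.smul_apply, smul_eq_mul, ← Finset.mul_sum, inv_mul_cancel₀ sum_pos.ne']

theorem stmt1_general [DecidableEq n] [Nonempty n] {M : Matrix n n 𝕜}
    (hM : M ∈ rowStochastic 𝕜 n) : ∃ v ∈ stdSimplex 𝕜 n, Mᵀ *ᵥ v = v := by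
  obtain ⟨w, w_ne_zero, hw⟩ := exists_vecMul_eq_self_iff_exists_mulVec_eq_self.2
    ⟨1, one_ne_zero, one_vecMul_of_mem_rowStochastic hM⟩
  have abs_w_ne_zero : |w| ≠ 0 := fun h ↦
    w_ne_zero <| funext fun i ↦ abs_eq_zero.1 (congrFun h i)
  have abs_w_pos : 0 < |w| := (abs_nonneg w).lt_of_ne' abs_w_ne_zero
  refine ⟨(∑ i, |w| i)⁻¹ • |w|, inv_sum_smul_mem_stdSimplex abs_w_pos, ?_⟩
  rw [mulVec_transpose, smul_vecMul, vecMul_abs_eq_abs_of_vecMul_eq_self hM hw]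

end LinearOrderedField

/-- Every row-stochastic matrix admits a stationary distribution: a probability vector `v`
with `Mᵀ v = v`. -/
theorem stmt1 (N : ℕ) (hN : 0 < N) (M : Matrix (Fin N) (Fin N) ℝ)
    (hM0 : ∀ i j, 0 ≤ M i j) (hM1 : ∀ i, ∑ j, M i j = 1) :
    ∃ v : Fin N → ℝ, (∀ i, 0 ≤ v i) ∧ (∑ i, v i = 1) ∧ Mᵀ *ᵥ v = v := by
  have : Nonempty (Fin N) := ⟨⟨0, hN⟩⟩
  obtain ⟨v, ⟨hv0, hv1⟩, hv⟩ := stmt1_general (mem_rowStochastic_iff_sum.2 ⟨hM0, hM1⟩)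
  exact ⟨v, hv0, hv1, hv⟩
end

section
/- Let M be an N×N row-stochastic real matrix that is irreducible, i.e. for every pair of indices (i,j) there exists a positive integer k with (M^k)ᵢⱼ > 0. Then the eigenspace {v ∈ ℝ^N : Mᵀ v = v} is one-dimensional; consequently the stationary probability vector of M is unique. -/
open Matrix BigOperators

/-!
Fixed vectors of `M` are functions `v` whose value at `i` is the average of `v` against the `i`-th
row of any power `M ^ k`. If `v` is maximal at `i`, averaging forces `v j = v i` whenever
`0 < (M ^ k) i j`. Hence a state `j` that can be reached from everywhere carries the maximum of `v`
and, applying this to `-v`, also its minimum, so `v` is constant. The fixed space of `Mᵀ` has the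
same dimension as that of `M` since transposition preserves rank, and on a line a linear functional
separates points as soon as it is nonzero; here the functional is the sum of the coordinates.
-/

section RowStochastic

variable {n : Type*} [Fintype n] [DecidableEq n]

theorem pow_mulVec_eq_self {R : Type*} [Semiring R] {M : Matrix n n R} {v : n → R}
    (hv : M *ᵥ v = v) (k : ℕ) : (M ^ k) *ᵥ v = v := by
  induction k with
  | zero => rw [pow_zero, one_mulVec]
  | succ k ih => rw [pow_succ, ← mulVec_mulVec, hv, ih]

theorem eq_of_mulVec_apply_eq_of_forall_le {R : Type*} [Semiring R] [PartialOrder R]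
    [IsStrictOrderedRing R] {M : Matrix n n R} (hM : M ∈ rowStochastic R n) {v : n → R} {i j : n}
    (hv : (M *ᵥ v) i = v i) (hmax : ∀ l, v l ≤ v i) (hij : 0 < M i j) : v j = v i := by
  by_contra hne
  have hlt : v j < v i := lt_of_le_of_ne (hmax j) hne
  refine lt_irrefl (v i) ?_
  calc
    v i = ∑ l, M i l * v l := hv.symm
    _ < ∑ l, M i l * v i :=
      Finset.sum_lt_sum
        (fun l _ ↦ mul_le_mul_of_nonneg_left (hmax l) (nonneg_of_mem_rowStochastic hM))
        ⟨j, Finset.mem_univ j, mul_lt_mul_of_pos_left hlt hij⟩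
    _ = v i := by rw [← Finset.sum_mul, sum_row_of_mem_rowStochastic hM, one_mul]

theorem apply_le_apply_of_mulVec_eq_self {R : Type*} [Semiring R] [LinearOrder R]
    [IsStrictOrderedRing R] {M : Matrix n n R} (hM : M ∈ rowStochastic R n) {j : n}
    (hj : ∀ i, ∃ k : ℕ, 0 < (M ^ k) i j) {v : n → R} (hv : M *ᵥ v = v) (i : n) : v i ≤ v j := by
  have : Nonempty n := ⟨j⟩
  obtain ⟨m, hmax⟩ := Finite.exists_max v
  obtain ⟨k, hk⟩ := hj m
  have hjm : v j = v m :=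
    eq_of_mulVec_apply_eq_of_forall_le (pow_mem hM k) (congrFun (pow_mulVec_eq_self hv k) m) hmax hk
  exact (hmax i).trans_eq hjm.symm

theorem apply_eq_apply_of_mulVec_eq_self {R : Type*} [Ring R] [LinearOrder R]
    [IsStrictOrderedRing R] {M : Matrix n n R} (hM : M ∈ rowStochastic R n) {j : n}
    (hj : ∀ i, ∃ k : ℕ, 0 < (M ^ k) i j) {v : n → R} (hv : M *ᵥ v = v) (i : n) : v i = v j := by
  have hneg : M *ᵥ (-v) = -v := by rw [mulVec_neg, hv]
  exact le_antisymm (apply_le_apply_of_mulVec_eq_self hM hj hv i)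
    (neg_le_neg_iff.1 (apply_le_apply_of_mulVec_eq_self hM hj hneg i))

theorem mem_ker_toLin'_sub_one {R : Type*} [CommRing R] {A : Matrix n n R} {v : n → R} :
    v ∈ LinearMap.ker (toLin' (A - 1)) ↔ A *ᵥ v = v := by
  rw [LinearMap.mem_ker, toLin'_apply, sub_mulVec, one_mulVec, sub_eq_zero]

theorem ker_toLin'_sub_one_eq_span_one {R : Type*} [CommRing R] [LinearOrder R]
    [IsStrictOrderedRing R] {M : Matrix n n R} (hM : M ∈ rowStochastic R n) {j : n}
    (hj : ∀ i, ∃ k : ℕ, 0 < (M ^ k) i j) :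
    LinearMap.ker (toLin' (M - 1)) = Submodule.span R {(1 : n → R)} := by
  refine le_antisymm (fun v hv ↦ ?_) ?_
  · refine Submodule.mem_span_singleton.2 ⟨v j, funext fun i ↦ ?_⟩
    have hij := apply_eq_apply_of_mulVec_eq_self hM hj (mem_ker_toLin'_sub_one.1 hv) i
    rw [hij, Pi.smul_apply, Pi.one_apply, smul_eq_mul, mul_one]
  · rw [Submodule.span_singleton_le_iff_mem, mem_ker_toLin'_sub_one]
    exact one_vecMul_of_mem_rowStochastic hM

theorem finrank_ker_toLin'_transpose {K : Type*} [Field K] (A : Matrix n n K) :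
    Module.finrank K (LinearMap.ker (toLin' Aᵀ)) = Module.finrank K (LinearMap.ker (toLin' A)) := by
  have hrange : Module.finrank K (LinearMap.range (toLin' Aᵀ)) =
      Module.finrank K (LinearMap.range (toLin' A)) := rank_transpose A
  have hA := LinearMap.finrank_range_add_finrank_ker (toLin' A)
  have hAt := LinearMap.finrank_range_add_finrank_ker (toLin' Aᵀ)
  lia

theorem finrank_ker_toLin'_transpose_sub_one {K : Type*} [Field K] [LinearOrder K]
    [IsStrictOrderedRing K] {M : Matrix n n K} (hM : M ∈ rowStochastic K n) {j : n}
    (hj : ∀ i, ∃ k : ℕ, 0 < (M ^ k) i j) :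
    Module.finrank K (LinearMap.ker (toLin' (Mᵀ - 1))) = 1 := by
  have : Nonempty n := ⟨j⟩
  have htranspose : Mᵀ - 1 = (M - 1)ᵀ := by rw [transpose_sub, transpose_one]
  rw [htranspose, finrank_ker_toLin'_transpose, ker_toLin'_sub_one_eq_span_one hM hj]
  exact finrank_span_singleton one_ne_zero

theorem eq_of_mem_of_finrank_eq_one_of_map_eq {K V V' : Type*} [DivisionRing K] [AddCommGroup V]
    [Module K V] [AddCommGroup V'] [Module K V'] {S : Submodule K V}
    (hS : Module.finrank K S = 1) (f : V →ₗ[K] V') {v w : V} (hv : v ∈ S) (hw : w ∈ S)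
    (hfv : f v ≠ 0) (hf : f v = f w) : v = w := by
  have hv0 : v ≠ 0 := fun h ↦ hfv (by rw [h, map_zero])
  rw [eq_span_singleton_of_mem_of_finrank_eq_one hS hv hv0] at hw
  obtain ⟨c, rfl⟩ := Submodule.mem_span_singleton.1 hw
  have hc : c • f v = (1 : K) • f v := by rw [one_smul, ← map_smul, ← hf]
  rw [smul_left_injective K hfv hc, one_smul]

theorem stmt3_general {K : Type*} [Field K] [LinearOrder K] [IsStrictOrderedRing K]
    {M : Matrix n n K} (hM : M ∈ rowStochastic K n) {j : n}
    (hj : ∀ i, ∃ k : ℕ, 0 < (M ^ k) i j) :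
    Module.finrank K (LinearMap.ker (toLin' (Mᵀ - 1))) = 1 ∧
      ∀ v w : n → K, ∑ i, v i = 1 → Mᵀ *ᵥ v = v → ∑ i, w i = 1 → Mᵀ *ᵥ w = w → v = w := by
  have hfinrank := finrank_ker_toLin'_transpose_sub_one hM hj
  refine ⟨hfinrank, fun v w hv1 hv hw1 hw ↦ ?_⟩
  let total : (n → K) →ₗ[K] K := ∑ i, LinearMap.proj i
  have htotal (u : n → K) : total u = ∑ i, u i := by
    simp only [total, LinearMap.sum_apply, LinearMap.proj_apply]
  refine eq_of_mem_of_finrank_eq_one_of_map_eq hfinrank total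
    (mem_ker_toLin'_sub_one.2 hv) (mem_ker_toLin'_sub_one.2 hw) ?_ ?_
  · rw [htotal, hv1]
    exact one_ne_zero
  · rw [htotal, htotal, hv1, hw1]

end RowStochastic

/-- For an irreducible row-stochastic matrix `M`, the fixed space `{v : Mᵀ v = v}` is
one-dimensional, and consequently the stationary probability vector is unique. -/
theorem stmt3 (N : ℕ) (hN : 0 < N) (M : Matrix (Fin N) (Fin N) ℝ)
    (hM0 : ∀ i j, 0 ≤ M i j) (hM1 : ∀ i, ∑ j, M i j = 1)
    (hirr : ∀ i j, ∃ k : ℕ, 1 ≤ k ∧ 0 < (M ^ k) i j) :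
    Module.finrank ℝ (LinearMap.ker (Matrix.toLin' (Mᵀ - 1))) = 1 ∧
      ∀ v w : Fin N → ℝ,
        (∀ i, 0 ≤ v i) → (∑ i, v i = 1) → Mᵀ *ᵥ v = v →
        (∀ i, 0 ≤ w i) → (∑ i, w i = 1) → Mᵀ *ᵥ w = w → v = w := by
  have h := stmt3_general (mem_rowStochastic_iff_sum.2 ⟨hM0, hM1⟩) (j := ⟨0, hN⟩)
    fun i ↦ (hirr i _).imp fun _ hk ↦ hk.2
  exact ⟨h.1, fun v w _ hv1 hv _ hw1 hw ↦ h.2 v w hv1 hv hw1 hw⟩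
end

section
/- Let 0 < α₂ < α₁ < 1, B > 0, and for s > 0 define a₀(s) = −2 + s^{α₁} + s^{α₂} and b₀(s) = √(4 + s^{2α₁} + s^{2α₂} − 2s^{α₁+α₂}). Then, as s → 0⁺, the Laplace transform of the first-passage-time density satisfies 1 − exp(−B·√((a₀(s)+b₀(s))/2)) ~ (B/√2)·s^{α₂/2}; equivalently, exp(−B·√((a₀+b₀)/2)) = 1 − (B/√2)·s^{α₂/2} + o(s^{α₂/2}) as s → 0⁺. (This is the Laplace-domain statement of the heavy tail f(t) ~ (B/(√2·|Γ(−α₂/2)|))·t^{−α₂/2−1} of the first-passage-time density, governed by the smaller exponent α₂.) -/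
open Real Filter Topology

/-!
The quantity `(a₀ + b₀) / 2` is the larger eigenvalue of `!![x - 1, 1; 1, y - 1]` at
`x = s ^ α₁`, `y = s ^ α₂`. For `x = y` this eigenvalue is exactly `x`, and the square root in it is
flat where the two diagonal entries agree, so to first order it is the mean `(x + y) / 2`. As
`s → 0⁺` the power with the smaller exponent dominates this mean, and `1 - exp (-B √·)` turns
`s ^ α₂ / 2` into `(B / √2) s ^ (α₂ / 2)`.
-/

open Asymptotics

lemma one_sub_exp_neg_isEquivalent_id : (fun t : ℝ ↦ 1 - exp (-t)) ~[𝓝 0] id := by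
  have hderiv : HasDerivAt (fun t : ℝ ↦ 1 - exp (-t)) 1 0 := by
    simpa using (hasDerivAt_neg (0 : ℝ)).exp.const_sub 1
  simpa using! hderiv.isLittleO

lemma sqrt_add_sq_sub_sqrt_isLittleO_id {c : ℝ} (hc : c ≠ 0) :
    (fun t : ℝ ↦ √(c + t ^ 2) - √c) =o[𝓝 0] id := by
  have hderiv : HasDerivAt (fun t : ℝ ↦ √(c + t ^ 2)) 0 0 := by
    simpa using (((hasDerivAt_id (0 : ℝ)).pow 2).const_add c).sqrt (by simpa using hc)
  simpa using! hderiv.isLittleO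

lemma isLittleO_rpow_rpow_nhdsGT_zero {p q : ℝ} (hpq : p < q) :
    (fun s : ℝ ↦ s ^ q) =o[𝓝[>] 0] (fun s ↦ s ^ p) := by
  have hne : ∀ᶠ s : ℝ in 𝓝[>] 0, s ^ p = 0 → s ^ q = 0 := by
    filter_upwards [self_mem_nhdsWithin] with s (hs : 0 < s) hzero
    exact absurd hzero (rpow_pos_of_pos hs p).ne'
  rw [isLittleO_iff_tendsto' hne]
  have hsub : Tendsto (fun s : ℝ ↦ s ^ (q - p)) (𝓝[>] 0) (𝓝 0) :=
    (tendsto_id.mono_left nhdsWithin_le_nhds).rpow_const_nhds_zero (sub_pos.2 hpq)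
  refine hsub.congr' ?_
  filter_upwards [self_mem_nhdsWithin] with s hs using rpow_sub hs q p

variable {ι : Type*} {l : Filter ι} {x y : ι → ℝ}

lemma isEquivalent_sqrt (h : x ~[l] y) : (fun i ↦ √(x i)) ~[l] (fun i ↦ √(y i)) := by
  obtain ⟨φ, hφ, hxy⟩ := h.exists_eq_mul
  refine isEquivalent_iff_exists_eq_mul.2 ⟨fun i ↦ √(φ i), by simpa using hφ.sqrt, ?_⟩
  filter_upwards [hxy, hφ.eventually_const_le zero_lt_one] with i hi hφi
  simp only [hi, Pi.mul_apply, sqrt_mul hφi]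

/-- The larger eigenvalue of `!![x - 1, 1; 1, y - 1]`, that is, of `diag(x, y) + M - 1` for the
transition matrix `M = !![0, 1; 1, 0]`. The paper's `(a₀(s) + b₀(s)) / 2` is
`perronRoot (s ^ α₁) (s ^ α₂)`; the radicand of `b₀` is written here as `4 + (x - y) ^ 2`. -/
noncomputable def perronRoot (x y : ℝ) : ℝ := (-2 + x + y + √(4 + (x - y) ^ 2)) / 2

lemma perronRoot_sub_mean_isLittleO (h : Tendsto (fun i ↦ x i - y i) l (𝓝 0)) :
    (fun i ↦ perronRoot (x i) (y i) - (x i + y i) / 2) =o[l] (fun i ↦ x i - y i) := by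
  have hsqrt : (fun i ↦ √(4 + (x i - y i) ^ 2) - √4) =o[l] (fun i ↦ x i - y i) :=
    (sqrt_add_sq_sub_sqrt_isLittleO_id four_ne_zero).comp_tendsto h
  have hfour : √(4 : ℝ) = 2 := by rw [sqrt_eq_iff_mul_self_eq] <;> norm_num
  refine (hsqrt.const_mul_left (1 / 2)).congr_left fun i ↦ ?_
  rw [perronRoot, hfour]
  ring

lemma perronRoot_isEquivalent_half_of_isLittleO (hy : Tendsto y l (𝓝 0)) (hxy : x =o[l] y) :
    (fun i ↦ perronRoot (x i) (y i)) ~[l] (fun i ↦ y i / 2) := by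
  have hx : Tendsto x l (𝓝 0) := hxy.isBigO.trans_tendsto hy
  have hdiff : (fun i ↦ perronRoot (x i) (y i) - (x i + y i) / 2) =o[l] y :=
    (perronRoot_sub_mean_isLittleO (by simpa using hx.sub hy)).trans_isBigO
      (hxy.isBigO.sub (isBigO_refl y l))
  have herror : (fun i ↦ perronRoot (x i) (y i) - y i / 2) =o[l] y :=
    (hdiff.add (hxy.const_mul_left (1 / 2))).congr_left fun i ↦ by ring
  have hhalf : y =O[l] (fun i ↦ y i / 2) :=
    (isBigO_const_mul_self 2 (fun i ↦ y i / 2) l).congr_left fun i ↦ by ring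
  exact herror.trans_isBigO hhalf

lemma one_sub_exp_neg_mul_sqrt_perronRoot_isEquivalent (B : ℝ) (hy : Tendsto y l (𝓝 0))
    (hxy : x =o[l] y) :
    (fun i ↦ 1 - exp (-B * √(perronRoot (x i) (y i)))) ~[l] (fun i ↦ B / √2 * √(y i)) := by
  have hexponent : (fun i ↦ B * √(perronRoot (x i) (y i))) ~[l] (fun i ↦ B / √2 * √(y i)) := by
    refine IsEquivalent.refl (u := fun _ ↦ B) |>.mul
      (isEquivalent_sqrt (perronRoot_isEquivalent_half_of_isLittleO hy hxy)) |>.congr_right ?_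
    exact .of_forall fun i ↦ by simp [sqrt_div', div_mul_eq_mul_div, mul_div_assoc]
  have hzero : Tendsto (fun i ↦ B * √(perronRoot (x i) (y i))) l (𝓝 0) :=
    hexponent.symm.tendsto_nhds (by simpa using hy.sqrt.const_mul (B / √2))
  simpa [Function.comp_def] using!
    (one_sub_exp_neg_isEquivalent_id.comp_tendsto hzero).trans hexponent

lemma perronRoot_rpow_rpow {s : ℝ} (hs : 0 < s) (p q : ℝ) :
    perronRoot (s ^ p) (s ^ q) =
      (-2 + s ^ p + s ^ q + √(4 + s ^ (2 * p) + s ^ (2 * q) - 2 * s ^ (p + q))) / 2 := by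
  have hradicand : 4 + s ^ (2 * p) + s ^ (2 * q) - 2 * s ^ (p + q) = 4 + (s ^ p - s ^ q) ^ 2 := by
    rw [two_mul p, two_mul q, rpow_add hs, rpow_add hs, rpow_add hs]
    ring
  rw [perronRoot, hradicand]

theorem stmt12_general {α₁ α₂ : ℝ} (hα₂0 : 0 < α₂) (hα : α₂ < α₁) (B : ℝ) :
    (fun s : ℝ ↦ 1 - exp (-B * √((-2 + s ^ α₁ + s ^ α₂ +
        √(4 + s ^ (2 * α₁) + s ^ (2 * α₂) - 2 * s ^ (α₁ + α₂))) / 2)))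
      ~[𝓝[>] 0] (fun s ↦ B / √2 * s ^ (α₂ / 2)) := by
  have hpow : Tendsto (fun s : ℝ ↦ s ^ α₂) (𝓝[>] 0) (𝓝 0) :=
    (tendsto_id.mono_left nhdsWithin_le_nhds).rpow_const_nhds_zero hα₂0
  refine (one_sub_exp_neg_mul_sqrt_perronRoot_isEquivalent B hpow
    (isLittleO_rpow_rpow_nhdsGT_zero hα)).congr_left ?_ |>.congr_right ?_
  · filter_upwards [self_mem_nhdsWithin] with s hs
    rw [perronRoot_rpow_rpow hs]
  · filter_upwards [self_mem_nhdsWithin] with s (hs : 0 < s)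
    rw [sqrt_eq_rpow (s ^ α₂), ← rpow_mul hs.le, mul_one_div]

/-- Laplace-domain heavy-tail statement for the first-passage-time density: for
`0 < α₂ < α₁ < 1` and `B > 0`, as `s → 0⁺`,
`1 − exp(−B √((a₀(s)+b₀(s))/2)) ~ (B/√2) s^{α₂/2}`, where `a₀(s) = −2 + s^{α₁} + s^{α₂}` and
`b₀(s) = √(4 + s^{2α₁} + s^{2α₂} − 2 s^{α₁+α₂})`. -/
theorem stmt12 (α₁ α₂ B : ℝ) (hα₂0 : 0 < α₂) (hα : α₂ < α₁) (hα₁1 : α₁ < 1) (hB : 0 < B) :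
    Tendsto
      (fun s : ℝ =>
        (1 - Real.exp (-B * Real.sqrt
              (((-2 + s ^ α₁ + s ^ α₂) +
                  Real.sqrt (4 + s ^ (2 * α₁) + s ^ (2 * α₂) - 2 * s ^ (α₁ + α₂))) / 2))) /
          (B / Real.sqrt 2 * s ^ (α₂ / 2)))
      (𝓝[>] 0) (𝓝 1) := by
  have hne : ∀ᶠ s : ℝ in 𝓝[>] 0, B / √2 * s ^ (α₂ / 2) ≠ 0 := by
    filter_upwards [self_mem_nhdsWithin] with s (hs : 0 < s) using by positivity
  exact (isEquivalent_iff_tendsto_one hne).1 (stmt12_general hα₂0 hα B)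
end

section
/- Let 0 < α < 1 and a, b > 0. Then ∫₀¹ (sin(πα)/π)·a·b·(1−x)^{α−1}x^{α−1} / (b²x^{2α} + a²(1−x)^{2α} + 2ab·cos(απ)·x^α(1−x)^α) dx = 1; that is, the limiting occupation-fraction density of the paper is a probability density on (0,1). -/
open Real MeasureTheory

/-!
With `p x = a * (1 - x) ^ α`, `q x = b * x ^ α` and `θ = π * α`, the density is, up to the factor
`1 / (π * α)`, the derivative of `arg (p + q * exp (θ * I))`. As `x` runs from `0` to `1` this path
goes from the positive real axis to the ray of argument `θ` inside the upper half-plane, so the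
argument increases by exactly `θ`.
-/

theorem integral_im_deriv_div_eq_arg_sub {s t : ℝ} {z z' : ℝ → ℂ} (hst : s ≤ t)
    (hz : ContinuousOn z (Set.Icc s t)) (hslit : ∀ x ∈ Set.Icc s t, z x ∈ Complex.slitPlane)
    (hz' : ∀ x ∈ Set.Ioo s t, HasDerivAt z (z' x) x)
    (hnonneg : ∀ x ∈ Set.Ioo s t, 0 ≤ (z' x / z x).im) :
    ∫ x in Set.Ioo s t, (z' x / z x).im = (z t).arg - (z s).arg := by
  have hcont : ContinuousOn (fun x ↦ (Complex.log (z x)).im) (Set.Icc s t) :=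
    Complex.continuous_im.comp_continuousOn (hz.clog hslit)
  have hderiv (x : ℝ) (hx : x ∈ Set.Ioo s t) :
      HasDerivAt (fun x ↦ (Complex.log (z x)).im) (z' x / z x).im x :=
    Complex.imCLM.hasFDerivAt.comp_hasDerivAt x
      ((hz' x hx).clog_real (hslit x (Set.Ioo_subset_Icc_self hx)))
  have hint := intervalIntegral.integrableOn_deriv_of_nonneg hcont hderiv hnonneg
  rw [← integral_Ioc_eq_integral_Ioo, ← intervalIntegral.integral_of_le hst,
    intervalIntegral.integral_eq_sub_of_hasDerivAt_of_le hst hcont hderiv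
      ((intervalIntegrable_iff_integrableOn_Ioc_of_le hst).2 hint),
    Complex.log_im, Complex.log_im]

theorem normSq_ofReal_add_ofReal_mul_exp (p q θ : ℝ) :
    Complex.normSq (p + q * Complex.exp (θ * Complex.I)) =
      p ^ 2 + q ^ 2 + 2 * p * q * cos θ := by
  simp only [Complex.normSq_apply, Complex.add_re, Complex.add_im, Complex.ofReal_re,
    Complex.ofReal_im, Complex.re_ofReal_mul, Complex.im_ofReal_mul,
    Complex.exp_ofReal_mul_I_re, Complex.exp_ofReal_mul_I_im]
  linear_combination q ^ 2 * sin_sq_add_cos_sq θ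

theorem im_ofReal_add_ofReal_mul_exp_div (p q p' q' θ : ℝ) :
    ((p' + q' * Complex.exp (θ * Complex.I)) / (p + q * Complex.exp (θ * Complex.I))).im =
      sin θ * (p * q' - p' * q) / (p ^ 2 + q ^ 2 + 2 * p * q * cos θ) := by
  rw [Complex.div_im, normSq_ofReal_add_ofReal_mul_exp, ← sub_div]
  simp only [Complex.add_re, Complex.add_im, Complex.ofReal_re, Complex.ofReal_im,
    Complex.re_ofReal_mul, Complex.im_ofReal_mul,
    Complex.exp_ofReal_mul_I_re, Complex.exp_ofReal_mul_I_im]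
  ring

theorem ofReal_add_ofReal_mul_exp_mem_slitPlane {q θ : ℝ} (p : ℝ) (hq : 0 < q) (hθ0 : 0 < θ)
    (hθπ : θ < π) : (p + q * Complex.exp (θ * Complex.I) : ℂ) ∈ Complex.slitPlane := by
  refine Or.inr (ne_of_gt ?_)
  simpa only [Complex.add_im, Complex.ofReal_im, Complex.im_ofReal_mul,
    Complex.exp_ofReal_mul_I_im, zero_add] using mul_pos hq (sin_pos_of_pos_of_lt_pi hθ0 hθπ)

theorem integral_sin_mul_wronskian_div {s t θ : ℝ} {p q p' q' : ℝ → ℝ} (hst : s < t)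
    (hθ0 : 0 < θ) (hθπ : θ < π)
    (hp : ContinuousOn p (Set.Icc s t)) (hq : ContinuousOn q (Set.Icc s t))
    (hp' : ∀ x ∈ Set.Ioo s t, HasDerivAt p (p' x) x)
    (hq' : ∀ x ∈ Set.Ioo s t, HasDerivAt q (q' x) x)
    (hps : 0 < p s) (hqs : q s = 0) (hpt : p t = 0) (hqpos : ∀ x ∈ Set.Ioc s t, 0 < q x)
    (hwronskian : ∀ x ∈ Set.Ioo s t, 0 ≤ p x * q' x - p' x * q x) :
    ∫ x in Set.Ioo s t, sin θ * (p x * q' x - p' x * q x) /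
      (p x ^ 2 + q x ^ 2 + 2 * p x * q x * cos θ) = θ := by
  set e : ℂ := Complex.exp (θ * Complex.I) with he
  have hstart : ((p s : ℂ) + q s * e).arg = 0 := by
    rw [hqs, Complex.ofReal_zero, zero_mul, add_zero, Complex.arg_ofReal_of_nonneg hps.le]
  have hend : ((p t : ℂ) + q t * e).arg = θ := by
    rw [hpt, Complex.ofReal_zero, zero_add, he, Complex.exp_mul_I]
    exact Complex.arg_mul_cos_add_sin_mul_I (hqpos t ⟨hst, le_rfl⟩) ⟨by linarith, hθπ.le⟩
  have hslit (x : ℝ) (hx : x ∈ Set.Icc s t) : (p x + q x * e : ℂ) ∈ Complex.slitPlane := by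
    rcases hx.1.eq_or_lt with rfl | hsx
    · simpa only [hqs, Complex.ofReal_zero, zero_mul, add_zero,
        Complex.ofReal_mem_slitPlane] using hps
    · exact ofReal_add_ofReal_mul_exp_mem_slitPlane _ (hqpos x ⟨hsx, hx.2⟩) hθ0 hθπ
  have hcont : ContinuousOn (fun x ↦ (p x + q x * e : ℂ)) (Set.Icc s t) := by fun_prop
  have hderiv (x : ℝ) (hx : x ∈ Set.Ioo s t) :
      HasDerivAt (fun x ↦ (p x + q x * e : ℂ)) (p' x + q' x * e) x :=
    (hp' x hx).ofReal_comp.add ((hq' x hx).ofReal_comp.mul_const e)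
  have hnonneg (x : ℝ) (hx : x ∈ Set.Ioo s t) :
      0 ≤ ((p' x + q' x * e) / (p x + q x * e)).im := by
    have hsin : 0 ≤ sin θ := sin_nonneg_of_nonneg_of_le_pi hθ0.le hθπ.le
    rw [im_ofReal_add_ofReal_mul_exp_div, ← normSq_ofReal_add_ofReal_mul_exp]
    exact div_nonneg (mul_nonneg hsin (hwronskian x hx)) (Complex.normSq_nonneg _)
  have hintegral := integral_im_deriv_div_eq_arg_sub hst.le hcont hslit hderiv hnonneg
  simpa only [e, im_ofReal_add_ofReal_mul_exp_div, hstart, hend, sub_zero] using hintegral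

section PowerPath

variable {x : ℝ} (a b α : ℝ)

theorem hasDerivAt_const_mul_one_sub_rpow (hx : x < 1) :
    HasDerivAt (fun x ↦ a * (1 - x) ^ α) (-(a * α * (1 - x) ^ (α - 1))) x :=
  ((((hasDerivAt_id x).const_sub 1).rpow_const (Or.inl (sub_pos.2 hx).ne')).const_mul a).congr_deriv
    (by simp only [id_eq]; ring)

theorem hasDerivAt_const_mul_rpow (hx : 0 < x) :
    HasDerivAt (fun x ↦ b * x ^ α) (b * α * x ^ (α - 1)) x :=
  ((hasDerivAt_rpow_const (Or.inl hx.ne')).const_mul b).congr_deriv (by ring)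

theorem wronskian_one_sub_rpow_rpow (hx0 : 0 < x) (hx1 : x < 1) :
    a * (1 - x) ^ α * (b * α * x ^ (α - 1)) - -(a * α * (1 - x) ^ (α - 1)) * (b * x ^ α) =
      α * a * b * (1 - x) ^ (α - 1) * x ^ (α - 1) := by
  have hx : x ^ α = x ^ (α - 1) * x := by rw [← rpow_add_one hx0.ne', sub_add_cancel]
  have hy : (1 - x) ^ α = (1 - x) ^ (α - 1) * (1 - x) := by
    rw [← rpow_add_one (sub_pos.2 hx1).ne', sub_add_cancel]
  rw [hx, hy]
  ring

end PowerPath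

theorem rpow_two_mul_eq_sq {x : ℝ} (hx : 0 ≤ x) (α : ℝ) : x ^ (2 * α) = (x ^ α) ^ 2 := by
  rw [mul_comm, rpow_mul hx, rpow_two]

theorem integral_sin_mul_rpow_div {α θ a b : ℝ} (hα : 0 < α) (hθ0 : 0 < θ) (hθπ : θ < π)
    (ha : 0 < a) (hb : 0 < b) :
    ∫ x in Set.Ioo (0 : ℝ) 1, sin θ * (α * a * b * (1 - x) ^ (α - 1) * x ^ (α - 1)) /
      ((a * (1 - x) ^ α) ^ 2 + (b * x ^ α) ^ 2 +
        2 * (a * (1 - x) ^ α) * (b * x ^ α) * cos θ) = θ := by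
  have hp : Continuous fun x : ℝ ↦ a * (1 - x) ^ α :=
    ((continuous_const.sub continuous_id).rpow_const fun _ ↦ Or.inr hα.le).const_mul a
  have hq : Continuous fun x : ℝ ↦ b * x ^ α :=
    (continuous_id.rpow_const fun _ ↦ Or.inr hα.le).const_mul b
  have hp_zero : 0 < a * (1 - 0 : ℝ) ^ α := by simpa only [sub_zero, one_rpow, mul_one] using ha
  have hq_zero : b * (0 : ℝ) ^ α = 0 := by rw [zero_rpow hα.ne', mul_zero]
  have hp_one : a * (1 - 1 : ℝ) ^ α = 0 := by rw [sub_self, zero_rpow hα.ne', mul_zero]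
  have hwronskian (x : ℝ) (hx : x ∈ Set.Ioo (0 : ℝ) 1) :=
    wronskian_one_sub_rpow_rpow a b α hx.1 hx.2
  have hwronskian_nonneg (x : ℝ) (hx : x ∈ Set.Ioo (0 : ℝ) 1) :
      0 ≤ α * a * b * (1 - x) ^ (α - 1) * x ^ (α - 1) :=
    have hx_pos : 0 < x := hx.1
    have hy_pos : 0 < 1 - x := sub_pos.2 hx.2
    by positivity
  have hintegral := integral_sin_mul_wronskian_div zero_lt_one hθ0 hθπ hp.continuousOn
    hq.continuousOn (fun x hx ↦ hasDerivAt_const_mul_one_sub_rpow a α hx.2)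
    (fun x hx ↦ hasDerivAt_const_mul_rpow b α hx.1) hp_zero hq_zero hp_one
    (fun x hx ↦ mul_pos hb (rpow_pos_of_pos hx.1 α))
    (fun x hx ↦ (hwronskian_nonneg x hx).trans_eq (hwronskian x hx).symm)
  refine (setIntegral_congr_fun measurableSet_Ioo fun x hx ↦ ?_).trans hintegral
  simp only [hwronskian x hx]

theorem stmt15_general (α θ a b : ℝ) (hα : 0 < α) (hθ0 : 0 < θ) (hθπ : θ < π) (ha : 0 < a)
    (hb : 0 < b) :
    ∫ x in Set.Ioo (0 : ℝ) 1,
        sin θ * α / θ * a * b * (1 - x) ^ (α - 1) * x ^ (α - 1) /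
          (b ^ 2 * x ^ (2 * α) + a ^ 2 * (1 - x) ^ (2 * α) +
            2 * a * b * cos θ * x ^ α * (1 - x) ^ α) = 1 := by
  have hscaled := congrArg (θ⁻¹ * ·) (integral_sin_mul_rpow_div hα hθ0 hθπ ha hb)
  simp only [← integral_const_mul, inv_mul_cancel₀ hθ0.ne'] at hscaled
  refine (setIntegral_congr_fun measurableSet_Ioo fun x hx ↦ ?_).trans hscaled
  simp only [rpow_two_mul_eq_sq hx.1.le, rpow_two_mul_eq_sq (sub_pos.2 hx.2).le]
  ring

/-- The Lamperti-type limiting occupation-fraction density integrates to `1` on `(0,1)`: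
it is a probability density. -/
theorem stmt15 (α a b : ℝ) (hα0 : 0 < α) (hα1 : α < 1) (ha : 0 < a) (hb : 0 < b) :
    ∫ x in Set.Ioo (0 : ℝ) 1,
        Real.sin (π * α) / π * a * b * (1 - x) ^ (α - 1) * x ^ (α - 1) /
          (b ^ 2 * x ^ (2 * α) + a ^ 2 * (1 - x) ^ (2 * α) +
            2 * a * b * Real.cos (α * π) * x ^ α * (1 - x) ^ α) = 1 := by
  simpa only [mul_div_mul_right _ _ hα0.ne', mul_comm α π] using stmt15_general α (π * α) a b hα0
    (mul_pos pi_pos hα0) (mul_lt_of_lt_one_right pi_pos hα1) ha hb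
end
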